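/- For every integer m ≥ 56, there exist ℓ ≥ 1 and distinct prime numbers q₁, …, q_ℓ, each congruent to 3 modulo 4, such that m = q₁ + ⋯ + q_ℓ. -/

import Mathlib

/-!
Richert's lemma: if every integer in `[a, b]` is a sum of distinct elements of `A`, and `p ∉ A` with
`a + p ≤ b + 1`, then every integer in `[a, b + p]` is a sum of distinct elements of `A ∪ {p}`.
Let `S n` be the sum of the primes `≡ 3 (mod 4)` up to `n`. Those up to `79` cover
`[56, S 79 - 56] = [56, 404]`, and adding the further ones in increasing order covers
`[56, S n - 56]` for all `n ≥ 79`: a new prime `n + 1` is admissible once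
`56 + (n + 1) ≤ (S n - 56) + 1`, that is, `n + 112 ≤ S n`.

For large `n` this growth follows from a Chebyshev argument. Comparing `∏ (4 j + 3)` with
`∏ (2 j + 1)` over `j < N`, the quotient is at least `2 ^ N`, whereas a divisor `d` occurs at most
once more in the numerator than in the denominator, and only if `d ≡ 3 (mod 4)`. Hence
`∑ Λ d ≥ N log 2` over `d ≤ 4 N`, `d ≡ 3 (mod 4)`, which bounds the number `k` of primes
`≡ 3 (mod 4)` up to `n` from below; and `S n ≥ 3 + 7 + ⋯ + (4 k - 1) = 2 k ^ 2 + k`.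
-/

open Finset
open ArithmeticFunction.vonMangoldt

theorem Icc_subset_subsetSum_insert {A : Finset ℕ} {a b p : ℕ} (hp : p ∉ A)
    (hA : Icc a b ⊆ A.subsetSum) (hab : a + p ≤ b + 1) :
    Icc a (b + p) ⊆ (insert p A).subsetSum := by
  intro m hm
  obtain ⟨ham, hmb⟩ := mem_Icc.1 hm
  by_cases hmb' : m ≤ b
  · exact subsetSum_mono (subset_insert p A) (hA (mem_Icc.2 ⟨ham, hmb'⟩))
  · obtain ⟨T, hTA, hT⟩ := mem_subsetSum_iff.1 (hA (mem_Icc.2 (by lia : a ≤ m - p ∧ m - p ≤ b)))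
    refine mem_subsetSum_iff.2 ⟨insert p T, insert_subset_insert p hTA, ?_⟩
    rw [sum_insert fun hpT ↦ hp (hTA hpT), hT]
    lia

theorem sum_sub_mem_subsetSum {A : Finset ℕ} {m : ℕ} (hm : m ∈ A.subsetSum) :
    ∑ x ∈ A, x - m ∈ A.subsetSum := by
  obtain ⟨T, hTA, rfl⟩ := mem_subsetSum_iff.1 hm
  refine mem_subsetSum_iff.2 ⟨A \ T, sdiff_subset, ?_⟩
  rw [← sum_sdiff hTA, Nat.add_sub_cancel]

theorem sum_range_card_le_sum (s : Finset ℕ) : ∑ i ∈ range #s, i ≤ ∑ x ∈ s, x := by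
  have h := sum_range_le_sum (s := s.map Nat.castEmbedding) (c := 0) (by simp)
  zify
  simpa using h

theorem mul_sum_range_card_add_le_sum_of_mod_eq {s : Finset ℕ} {k r : ℕ}
    (hs : ∀ x ∈ s, x % k = r) : k * ∑ i ∈ range #s, i + r * #s ≤ ∑ x ∈ s, x := by
  have hinj : Set.InjOn (· / k) (s : Set ℕ) := fun x hx y hy hxy ↦ by
    rw [← Nat.div_add_mod x k, ← Nat.div_add_mod y k, hs x hx, hs y hy, show x / k = y / k from hxy]
  calc k * ∑ i ∈ range #s, i + r * #s
      = k * ∑ i ∈ range #(s.image (· / k)), i + r * #s := by rw [card_image_of_injOn hinj]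
    _ ≤ k * ∑ x ∈ s.image (· / k), x + r * #s :=
        Nat.add_le_add_right (Nat.mul_le_mul_left k (sum_range_card_le_sum _)) _
    _ = ∑ x ∈ s, (k * (x / k) + r) := by
        rw [sum_image hinj, sum_add_distrib, mul_sum, sum_const, smul_eq_mul, mul_comm r]
    _ = ∑ x ∈ s, x := sum_congr rfl fun x hx ↦ by rw [← hs x hx, Nat.div_add_mod]

theorem dvd_mul_add_iff_modEq {a b d r j : ℕ} (hda : d.Coprime a) (hr : d ∣ a * r + b) :
    d ∣ a * j + b ↔ j ≡ r [MOD d] := by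
  rw [← Nat.modEq_zero_iff_dvd] at hr ⊢
  refine ⟨fun hj ↦ ?_, fun hjr ↦ ((hjr.mul_left a).add_right b).trans hr⟩
  exact ((hj.trans hr.symm).add_right_cancel' b).cancel_left_of_coprime hda

theorem count_modEq_le_count_modEq {d r s : ℕ} (hrs : r ≤ s) (hsd : s < d) (N : ℕ) :
    N.count (· ≡ s [MOD d]) ≤ N.count (· ≡ r [MOD d]) := by
  rw [Nat.count_modEq_card _ (by lia), Nat.count_modEq_card _ (by lia),
    Nat.mod_eq_of_lt hsd, Nat.mod_eq_of_lt (hrs.trans_lt hsd)]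
  split_ifs <;> lia

theorem count_modEq_le_count_modEq_add_one {d : ℕ} (hd : 0 < d) (r s N : ℕ) :
    N.count (· ≡ s [MOD d]) ≤ N.count (· ≡ r [MOD d]) + 1 := by
  rw [Nat.count_modEq_card _ hd, Nat.count_modEq_card _ hd]
  split_ifs <;> lia

/- For odd `d`, both conditions single out one residue class modulo `d`. Its least representative is
`(d - 1) / 2` on the right; on the left it is `(3 * d - 3) / 4`, which is no smaller,
when `d % 4 = 1`. -/
theorem count_dvd_four_mul_add_three_le (d N : ℕ) :
    N.count (d ∣ 4 * · + 3) ≤ N.count (d ∣ 2 * · + 1) + if d % 4 = 3 then 1 else 0 := by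
  rcases Nat.even_or_odd d with heven | hodd
  · have hnone : N.count (d ∣ 4 * · + 3) = 0 := Nat.count_of_forall_not fun j _ hdvd ↦ by
      have := heven.two_dvd.trans hdvd
      lia
    lia
  have hcop : d.Coprime 2 := Nat.coprime_two_right.2 hodd
  have hright : ∀ j, d ∣ 2 * j + 1 ↔ j ≡ (d - 1) / 2 [MOD d] := fun j ↦
    dvd_mul_add_iff_modEq hcop ⟨1, by grind⟩
  rcases Nat.odd_mod_four_iff.1 (Nat.odd_iff.1 hodd) with h1 | h3
  · have hleft : ∀ j, d ∣ 4 * j + 3 ↔ j ≡ (3 * d - 3) / 4 [MOD d] := fun j ↦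
      dvd_mul_add_iff_modEq (hcop.pow_right 2) ⟨3, by lia⟩
    simp only [hleft, hright]
    exact Nat.le_add_right_of_le (count_modEq_le_count_modEq (by lia) (by lia) N)
  · have hleft : ∀ j, d ∣ 4 * j + 3 ↔ j ≡ (d - 3) / 4 [MOD d] := fun j ↦
      dvd_mul_add_iff_modEq (hcop.pow_right 2) ⟨1, by lia⟩
    simp only [hleft, hright, if_pos h3]
    exact count_modEq_le_count_modEq_add_one hodd.pos _ _ N

theorem sum_log_eq_sum_vonMangoldt_mul_card {ι : Type*} {s : Finset ι} {f : ι → ℕ} {n : ℕ}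
    (hf : ∀ i ∈ s, f i ≠ 0 ∧ f i ≤ n) :
    ∑ i ∈ s, Real.log (f i) = ∑ d ∈ range (n + 1), Λ d * #{i ∈ s | d ∣ f i} := by
  have hlog : ∀ i ∈ s, Real.log (f i) = ∑ d ∈ range (n + 1), if d ∣ f i then Λ d else 0 := by
    intro i hi
    obtain ⟨hne, hle⟩ := hf i hi
    rw [← ArithmeticFunction.vonMangoldt_sum, ← sum_filter]
    refine sum_congr (Finset.ext fun d ↦ ?_) fun _ _ ↦ rfl
    simp only [Nat.mem_divisors, mem_filter, mem_range]
    exact ⟨fun h ↦ ⟨by have := Nat.le_of_dvd (by lia) h.1; lia, h.1⟩, fun h ↦ ⟨h.2, hne⟩⟩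
  rw [sum_congr rfl hlog, sum_comm]
  refine sum_congr rfl fun d _ ↦ ?_
  rw [← sum_filter, sum_const, nsmul_eq_mul, mul_comm]

theorem sum_vonMangoldt_prime_pow_le_log {p : ℕ} (hp : p.Prime) (n : ℕ) :
    ∑ k ∈ Icc 1 (Nat.log p n), Λ (p ^ k) ≤ Real.log n := by
  rcases eq_or_ne n 0 with rfl | hn
  · simp
  calc ∑ k ∈ Icc 1 (Nat.log p n), Λ (p ^ k)
      = ∑ _k ∈ Icc 1 (Nat.log p n), Real.log p := sum_congr rfl fun k hk ↦ by
        rw [ArithmeticFunction.vonMangoldt_apply_pow (by grind),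
          ArithmeticFunction.vonMangoldt_apply_prime hp]
    _ = Nat.log p n * Real.log p := by simp
    _ ≤ Real.log n := Real.le_log_of_pow_le (mod_cast hp.pos)
        (mod_cast Nat.pow_log_le_self p hn)

theorem sum_vonMangoldt_le_card_mul_log {D P : Finset ℕ} {n : ℕ} (hDn : ∀ d ∈ D, d ≤ n)
    (hP : ∀ p ∈ P, p.Prime) (hDP : ∀ p k, p.Prime → k ≠ 0 → p ^ k ∈ D → p ∈ P) :
    ∑ d ∈ D, Λ d ≤ #P * Real.log n := by
  let powers (p : ℕ) : Finset ℕ := (Icc 1 (Nat.log p n)).image (p ^ ·)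
  have hcover : {d ∈ D | IsPrimePow d} ⊆ P.biUnion powers := by
    intro d hd
    obtain ⟨hdD, hpow⟩ := mem_filter.1 hd
    obtain ⟨p, k, hp, hk, rfl⟩ := (isPrimePow_nat_iff d).1 hpow
    refine mem_biUnion.2 ⟨p, hDP p k hp hk.ne' hdD, mem_image_of_mem _ ?_⟩
    exact mem_Icc.2 ⟨hk, Nat.le_log_of_pow_le hp.one_lt (hDn _ hdD)⟩
  have hdisjoint : (P : Set ℕ).PairwiseDisjoint powers := by
    rw [pairwiseDisjoint_iff]
    grind [Nat.Prime.pow_inj']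
  calc ∑ d ∈ D, Λ d
      = ∑ d ∈ D with IsPrimePow d, Λ d :=
        (sum_filter_of_ne fun _ _ ↦ ArithmeticFunction.vonMangoldt_ne_zero_iff.1).symm
    _ ≤ ∑ d ∈ P.biUnion powers, Λ d := sum_le_sum_of_subset_of_nonneg hcover
        fun _ _ _ ↦ ArithmeticFunction.vonMangoldt_nonneg
    _ = ∑ p ∈ P, ∑ k ∈ Icc 1 (Nat.log p n), Λ (p ^ k) := by
        rw [sum_biUnion hdisjoint]
        exact sum_congr rfl fun p hp ↦
          sum_image (Nat.pow_right_injective (hP p hp).two_le).injOn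
    _ ≤ #P * Real.log n := by
        rw [← nsmul_eq_mul]
        exact sum_le_card_nsmul P _ _ fun p hp ↦ sum_vonMangoldt_prime_pow_le_log (hP p hp) n

/-- The primes `p ≤ n` with `p ≡ 3 (mod 4)`, i.e. `𝒫(4,3) ∩ [0, n]`. -/
def primesThreeModFour (n : ℕ) : Finset ℕ := {p ∈ n.primesLE | p % 4 = 3}

theorem mem_primesThreeModFour {n p : ℕ} :
    p ∈ primesThreeModFour n ↔ p ≤ n ∧ p.Prime ∧ p % 4 = 3 := by
  simp [primesThreeModFour, Nat.mem_primesLE, and_assoc]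

theorem primesThreeModFour_mono : Monotone primesThreeModFour := fun _ _ hab _ hp ↦
  mem_primesThreeModFour.2 ((mem_primesThreeModFour.1 hp).imp_left hab.trans')

theorem primesThreeModFour_succ (n : ℕ) :
    primesThreeModFour (n + 1) =
      if (n + 1).Prime ∧ (n + 1) % 4 = 3 then insert (n + 1) (primesThreeModFour n)
      else primesThreeModFour n := by
  grind [mem_primesThreeModFour]

theorem mod_four_eq_three_of_pow {a k : ℕ} (h : a ^ k % 4 = 3) : a % 4 = 3 := by
  have hk : k ≠ 0 := by rintro rfl; simp at h
  have hodd : Odd a := (Nat.odd_pow_iff hk).1 (Nat.odd_iff.2 (by lia))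
  refine (Nat.odd_mod_four_iff.1 (Nat.odd_iff.1 hodd)).resolve_left fun h1 ↦ ?_
  have hpow : a ^ k % 4 = 1 ^ k % 4 := Nat.ModEq.pow k h1
  simp [h] at hpow

theorem div_four_mul_log_two_le_sum_vonMangoldt (n : ℕ) :
    (n / 4 : ℕ) * Real.log 2 ≤ ∑ d ∈ range (n + 1) with d % 4 = 3, Λ d := by
  set N := n / 4
  have hnum := sum_log_eq_sum_vonMangoldt_mul_card (s := range N) (f := (4 * · + 3)) (n := n)
    (by grind)
  have hden := sum_log_eq_sum_vonMangoldt_mul_card (s := range N) (f := (2 * · + 1)) (n := n)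
    (by grind)
  have hquot : N * Real.log 2 + ∑ j ∈ range N, Real.log (2 * j + 1 : ℕ) ≤
      ∑ j ∈ range N, Real.log (4 * j + 3 : ℕ) := by
    have hconst : N * Real.log 2 = ∑ _j ∈ range N, Real.log 2 := by simp
    rw [hconst, ← sum_add_distrib]
    refine sum_le_sum fun j _ ↦ ?_
    rw [← Real.log_mul (by positivity) (by positivity)]
    exact Real.log_le_log (by positivity) (by push_cast; linarith)
  have hcount : ∑ d ∈ range (n + 1), Λ d * #{j ∈ range N | d ∣ 4 * j + 3} ≤
      ∑ d ∈ range (n + 1), Λ d * #{j ∈ range N | d ∣ 2 * j + 1} +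
        ∑ d ∈ range (n + 1) with d % 4 = 3, Λ d := by
    rw [sum_filter, ← sum_add_distrib]
    refine sum_le_sum fun d _ ↦ ?_
    have h := count_dvd_four_mul_add_three_le d N
    rw [Nat.count_eq_card_filter_range, Nat.count_eq_card_filter_range] at h
    calc Λ d * #{j ∈ range N | d ∣ 4 * j + 3}
        ≤ Λ d * (#{j ∈ range N | d ∣ 2 * j + 1} + if d % 4 = 3 then 1 else 0) :=
          mul_le_mul_of_nonneg_left (mod_cast h) ArithmeticFunction.vonMangoldt_nonneg
      _ = _ := by rw [mul_add, mul_ite, mul_one, mul_zero]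
  linarith

theorem two_pow_div_four_le_pow_card_primesThreeModFour {n : ℕ} (hn : n ≠ 0) :
    2 ^ (n / 4) ≤ n ^ #(primesThreeModFour n) := by
  have hupper : ∑ d ∈ range (n + 1) with d % 4 = 3, Λ d ≤
      #(primesThreeModFour n) * Real.log n := by
    refine sum_vonMangoldt_le_card_mul_log (by grind)
      (fun p hp ↦ (mem_primesThreeModFour.1 hp).2.1) fun p k hp hk hpk ↦ ?_
    obtain ⟨hlt, hmod⟩ := mem_filter.1 hpk
    have hle : p ≤ n := (Nat.le_self_pow hk p).trans (by grind)
    exact mem_primesThreeModFour.2 ⟨hle, hp, mod_four_eq_three_of_pow hmod⟩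
  have hlog := (div_four_mul_log_two_le_sum_vonMangoldt n).trans hupper
  rw [← Real.log_pow, ← Real.log_pow, Real.log_le_log_iff (by positivity) (by positivity)] at hlog
  exact_mod_cast hlog

theorem div_four_le_mul_card_primesThreeModFour {n : ℕ} (hn : n ≠ 0) :
    n / 4 ≤ (Nat.log 2 n + 1) * #(primesThreeModFour n) := by
  refine (Nat.pow_le_pow_iff_right one_lt_two).1 ?_
  calc 2 ^ (n / 4)
      ≤ n ^ #(primesThreeModFour n) := two_pow_div_four_le_pow_card_primesThreeModFour hn
    _ ≤ (2 ^ (Nat.log 2 n + 1)) ^ #(primesThreeModFour n) := by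
        gcongr
        exact (Nat.lt_pow_succ_log_self one_lt_two n).le
    _ = 2 ^ ((Nat.log 2 n + 1) * #(primesThreeModFour n)) := (pow_mul ..).symm

theorem two_mul_card_sq_add_card_le_sum_primesThreeModFour (n : ℕ) :
    2 * #(primesThreeModFour n) ^ 2 + #(primesThreeModFour n) ≤ ∑ q ∈ primesThreeModFour n, q := by
  have h := mul_sum_range_card_add_le_sum_of_mod_eq (s := primesThreeModFour n) (k := 4)
    fun p hp ↦ (mem_primesThreeModFour.1 hp).2.2
  have hgauss := sum_range_id_mul_two #(primesThreeModFour n)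
  rcases Nat.eq_zero_or_pos #(primesThreeModFour n) with hzero | hpos
  · simp [hzero]
  · zify [hpos] at *
    linarith

theorem fourteen_mul_succ_sq_le_two_pow {t : ℕ} (ht : 11 ≤ t) : 14 * (t + 1) ^ 2 ≤ 2 ^ t := by
  induction t, ht using Nat.le_induction with
  | base => norm_num
  | succ t ht ih =>
    rw [pow_succ 2 t]
    nlinarith

theorem add_112_le_sum_primesThreeModFour_of_2048_le {n : ℕ} (hn : 2048 ≤ n) :
    n + 112 ≤ ∑ q ∈ primesThreeModFour n, q := by
  refine le_trans ?_ (two_mul_card_sq_add_card_le_sum_primesThreeModFour n)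
  have hcard := div_four_le_mul_card_primesThreeModFour (n := n) (by lia)
  have ht : 11 ≤ Nat.log 2 n := Nat.le_log_of_pow_le one_lt_two hn
  have hlog : 14 * (Nat.log 2 n + 1) ^ 2 ≤ n :=
    (fourteen_mul_succ_sq_le_two_pow ht).trans (Nat.pow_log_le_self 2 (by lia))
  generalize #(primesThreeModFour n) = k at *
  generalize Nat.log 2 n + 1 = t at *
  by_contra! hlt
  have hquad : 7 * (n - 3) ^ 2 ≤ 4 * (n * (n + 112)) := calc
    7 * (n - 3) ^ 2 ≤ 7 * (4 * (t * k)) ^ 2 := by gcongr; lia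
    _ = 4 * (14 * t ^ 2 * (2 * k ^ 2)) := by ring
    _ ≤ 4 * (n * (n + 112)) := by gcongr; lia
  zify [(by lia : 3 ≤ n)] at *
  nlinarith

theorem sum_primesThreeModFour_79 : ∑ q ∈ primesThreeModFour 79, q = 460 := by
  decide +kernel

theorem sum_primesThreeModFour_200 : ∑ q ∈ primesThreeModFour 200, q = 2200 := by
  decide +kernel

theorem add_112_le_sum_primesThreeModFour {n : ℕ} (hn : 79 ≤ n) :
    n + 112 ≤ ∑ q ∈ primesThreeModFour n, q := by
  have hmono {a : ℕ} (ha : a ≤ n) :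
      ∑ q ∈ primesThreeModFour a, q ≤ ∑ q ∈ primesThreeModFour n, q :=
    sum_le_sum_of_subset (primesThreeModFour_mono ha)
  rcases lt_or_ge n 200 with h200 | h200
  · have := hmono hn
    have := sum_primesThreeModFour_79
    lia
  rcases lt_or_ge n 2048 with h2048 | h2048
  · have := hmono h200
    have := sum_primesThreeModFour_200
    lia
  · exact add_112_le_sum_primesThreeModFour_of_2048_le h2048

theorem Icc_subset_subsetSum_primesThreeModFour_79 :
    Icc 56 404 ⊆ (primesThreeModFour 79).subsetSum := by
  have hsearch : ∀ m ∈ Icc 56 230, ∃ T ∈ (primesThreeModFour 79).powerset, ∑ q ∈ T, q = m := by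
    decide +kernel
  have hlower : Icc 56 230 ⊆ (primesThreeModFour 79).subsetSum := fun m hm ↦ by
    obtain ⟨T, hT, hsum⟩ := hsearch m hm
    exact mem_subsetSum_iff.2 ⟨T, mem_powerset.1 hT, hsum⟩
  intro m hm
  obtain ⟨hm56, hm404⟩ := mem_Icc.1 hm
  rcases le_total m 230 with h230 | h230
  · exact hlower (mem_Icc.2 ⟨hm56, h230⟩)
  · have hcompl := sum_sub_mem_subsetSum <|
      hlower (mem_Icc.2 (by lia : 56 ≤ 460 - m ∧ 460 - m ≤ 230))
    rwa [sum_primesThreeModFour_79, Nat.sub_sub_self (by lia)] at hcompl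

theorem Icc_subset_subsetSum_primesThreeModFour {n : ℕ} (hn : 79 ≤ n) :
    Icc 56 (∑ q ∈ primesThreeModFour n, q - 56) ⊆ (primesThreeModFour n).subsetSum := by
  induction n, hn using Nat.le_induction with
  | base =>
    rw [sum_primesThreeModFour_79]
    exact Icc_subset_subsetSum_primesThreeModFour_79
  | succ n hn ih =>
    rw [primesThreeModFour_succ]
    split_ifs with hprime
    · have hnotMem : n + 1 ∉ primesThreeModFour n := by simp [mem_primesThreeModFour]
      have hgrowth := add_112_le_sum_primesThreeModFour hn
      have hstep := Icc_subset_subsetSum_insert hnotMem ih (by lia)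
      rw [sum_insert hnotMem]
      exact (Icc_subset_Icc_right (by lia)).trans hstep
    · exact ih

/-- **Theorem 1 (b).**
For every integer `m ≥ 56`, there exist finitely many (at least one) distinct primes,
each congruent to `3` modulo `4`, whose sum is `m`. -/
theorem stmt7 (m : ℕ) (hm : 56 ≤ m) :
    ∃ T : Finset ℕ, T.Nonempty ∧ (∀ q ∈ T, q.Prime ∧ q % 4 = 3) ∧ ∑ q ∈ T, q = m := by
  have hn : 79 ≤ m + 79 := Nat.le_add_left 79 m
  have hmn := add_112_le_sum_primesThreeModFour hn
  obtain ⟨T, hTsub, hTsum⟩ := mem_subsetSum_iff.1 <|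
    Icc_subset_subsetSum_primesThreeModFour hn (mem_Icc.2 ⟨hm, by lia⟩)
  refine ⟨T, ?_, fun q hq ↦ (mem_primesThreeModFour.1 (hTsub hq)).2, hTsum⟩
  exact nonempty_of_sum_ne_zero (by lia : ∑ q ∈ T, q ≠ 0)
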